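/- Let X be an undirected graph, let f : Y → X and g : Z → X be coverings such that neither Y nor Z has a loop (no half-arc u with s(u) = t(u)), and let h : Y → Z be a covering with g ∘ h = f. Suppose that for every p ≥ 1 and every covering v : U → X such that U is a p-cycle with an attached forest, postcomposition with h gives a bijection from the set of morphisms u : U → Y with f ∘ u = v to the set of morphisms w : U → Z with g ∘ w = v. Then for every p ≥ 1, the map sending a p-cycle c of Y to h ∘ c restricts to a bijection from the backtrack-free p-cycles of Y to the backtrack-free p-cycles of Z; in particular, when Y and Z are finite they have the same Ihara zeta function. -/

import Mathlib

open CategoryTheory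

namespace Paper

/-- An undirected graph: a set of nodes, a set of half-arcs, source and target maps
and an involution `i` on half-arcs with `s ∘ i = t`. -/
structure UGraph : Type 1 where
  nodes : Type
  half : Type
  s : half → nodes
  t : half → nodes
  inv : half → half
  inv_inv : ∀ a, inv (inv a) = a
  s_inv : ∀ a, s (inv a) = t a

/-- A morphism of undirected graphs: maps on nodes and half-arcs commuting with
source, target and the involution. -/
@[ext]
structure UGraph.Hom (X Y : UGraph) where
  f0 : X.nodes → Y.nodes
  f1 : X.half → Y.half
  comm_s : ∀ a, Y.s (f1 a) = f0 (X.s a)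
  comm_t : ∀ a, Y.t (f1 a) = f0 (X.t a)
  comm_inv : ∀ a, Y.inv (f1 a) = f1 (X.inv a)

/-- The category of undirected graphs. -/
instance : Category UGraph where
  Hom := UGraph.Hom
  id X := ⟨id, id, fun _ => rfl, fun _ => rfl, fun _ => rfl⟩
  comp f g := ⟨g.f0 ∘ f.f0, g.f1 ∘ f.f1,
    fun a => by simp [Function.comp, g.comm_s, f.comm_s],
    fun a => by simp [Function.comp, g.comm_t, f.comm_t],
    fun a => by simp [Function.comp, g.comm_inv, f.comm_inv]⟩

@[simp] theorem UGraph.comp_f0 {X Y Z : UGraph} (f : X ⟶ Y) (g : Y ⟶ Z) :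
    (f ≫ g).f0 = g.f0 ∘ f.f0 := rfl

@[simp] theorem UGraph.comp_f1 {X Y Z : UGraph} (f : X ⟶ Y) (g : Y ⟶ Z) :
    (f ≫ g).f1 = g.f1 ∘ f.f1 := rfl

/-- two nodes are adjacent if some half-arc goes from one to the other. -/
def UGraph.adj (X : UGraph) (x y : X.nodes) : Prop :=
  ∃ u : X.half, X.s u = x ∧ X.t u = y

/-- An undirected graph is connected if any two nodes are joined by a finite
sequence of consecutively incident half-arcs. -/
def UGraph.Connected (X : UGraph) : Prop :=
  ∀ x y : X.nodes, Relation.ReflTransGen X.adj x y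

/-- The undirected `p`-cycle `c^p_U` : nodes `ℤ/pℤ`, half-arcs `[n]⁺ = (n, true)`
and `[n]⁻ = (n, false)` with `s [n]⁺ = [n]`, `t [n]⁺ = [n+1]`, `i [n]⁺ = [n]⁻`. -/
def cycleU (p : ℕ) : UGraph where
  nodes := ZMod p
  half := ZMod p × Bool
  s a := if a.2 then a.1 else a.1 + 1
  t a := if a.2 then a.1 + 1 else a.1
  inv a := (a.1, !a.2)
  inv_inv a := by simp
  s_inv a := by rcases a with ⟨n, _ | _⟩ <;> simp

/-- A `p`-cycle `h : c^p_U ⟶ X` is backtrack-free if `h₁([n+1]⁺) ≠ h₁([n]⁻)` for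
all `n`. -/
def BFree {p : ℕ} {X : UGraph} (h : cycleU p ⟶ X) : Prop :=
  ∀ n : ZMod p, h.f1 (n + 1, true) ≠ h.f1 (n, false)

/-- A morphism of undirected graphs is a covering if it restricts to a bijection on
the half-arcs issued from each node. -/
def IsCovering {X Y : UGraph} (f : X ⟶ Y) : Prop :=
  ∀ x : X.nodes,
    Function.Bijective (fun u : {u : X.half // X.s u = x} =>
      (⟨f.f1 u.1, by rw [f.comm_s, u.2]⟩ : {v : Y.half // Y.s v = f.f0 x}))

end Paper

namespace Paper

/-- `U` is a `p`-cycle with an attached forest via `c : c^p_U ⟶ U`. -/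
def CycleForest (p : ℕ) {U : UGraph} (c : cycleU p ⟶ U) : Prop :=
  U.Connected ∧ Function.Injective c.f0 ∧ Function.Injective c.f1 ∧
    ∀ q : ℕ, 1 ≤ q → ∀ d : cycleU q ⟶ U, BFree d →
      (∀ n : ZMod q, ∃ m : ZMod p, d.f0 n = c.f0 m) ∧
        (∀ a : ZMod q × Bool, ∃ b : ZMod p × Bool, d.f1 a = c.f1 b)

section Helpers

open Classical

theorem IsCovering.inj {X Y : UGraph} {f : X ⟶ Y} (hf : IsCovering f) {a b : X.half}
    (hs : X.s a = X.s b) (h : f.f1 a = f.f1 b) : a = b := by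
  have := (hf (X.s b)).1 (a₁ := ⟨a, hs⟩) (a₂ := ⟨b, rfl⟩) (Subtype.ext h)
  exact congrArg Subtype.val this

theorem IsCovering.surj {X Y : UGraph} {f : X ⟶ Y} (hf : IsCovering f) (x : X.nodes)
    (b : Y.half) (hb : Y.s b = f.f0 x) : ∃ a, X.s a = x ∧ f.f1 a = b := by
  obtain ⟨⟨a, ha⟩, h⟩ := (hf x).2 ⟨b, hb⟩
  exact ⟨a, ha, congrArg Subtype.val h⟩

theorem s_plus {p : ℕ} {X : UGraph} (e : cycleU p ⟶ X) (n : ZMod p) :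
    X.s (e.f1 (n, true)) = e.f0 n := 
  e.comm_s _

theorem s_minus {p : ℕ} {X : UGraph} (e : cycleU p ⟶ X) (n : ZMod p) :
    X.s (e.f1 (n, false)) = e.f0 (n + 1 : ZMod p) := 
  e.comm_s _

theorem t_plus {p : ℕ} {X : UGraph} (e : cycleU p ⟶ X) (n : ZMod p) :
    X.t (e.f1 (n, true)) = e.f0 (n + 1 : ZMod p) := 
  e.comm_t _

theorem t_minus {p : ℕ} {X : UGraph} (e : cycleU p ⟶ X) (n : ZMod p) :
    X.t (e.f1 (n, false)) = e.f0 n := 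
  e.comm_t _

theorem inv_plus {p : ℕ} {X : UGraph} (e : cycleU p ⟶ X) (n : ZMod p) :
    X.inv (e.f1 (n, true)) = e.f1 (n, false) := 
  e.comm_inv _

theorem inv_minus {p : ℕ} {X : UGraph} (e : cycleU p ⟶ X) (n : ZMod p) :
    X.inv (e.f1 (n, false)) = e.f1 (n, true) := 
  e.comm_inv _

theorem t_inv (X : UGraph) (a : X.half) : X.t (X.inv a) = X.s a := by
  rw [← X.s_inv, X.inv_inv]

theorem BFree.comp {p : ℕ} {X Y : UGraph} {f : Y ⟶ X} (hf : IsCovering f)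
    {c : cycleU p ⟶ Y} (hc : BFree c) : BFree (c ≫ f) := by
  intro n hn
  refine hc n (hf.inj ?_ hn)
  rw [s_plus, s_minus]

theorem BFree.of_comp {p : ℕ} {X Y : UGraph} {f : Y ⟶ X}
    {c : cycleU p ⟶ Y} (hc : BFree (c ≫ f)) : BFree c := by
  intro n hn
  exact hc n (congrArg f.f1 hn)

/-- uniqueness of lifts from a connected graph -/
theorem lift_unique {U W X : UGraph} {φ : W ⟶ X} (hφ : IsCovering φ) (hU : U.Connected)
    (u uu : U ⟶ W) (h : u ≫ φ = uu ≫ φ) (x : U.nodes) (hx : u.f0 x = uu.f0 x) : u = uu := by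
  have h1 : ∀ a, φ.f1 (u.f1 a) = φ.f1 (uu.f1 a) := fun a =>
    congrFun (congrArg UGraph.Hom.f1 h) a
  have key : ∀ a, u.f0 (U.s a) = uu.f0 (U.s a) → u.f1 a = uu.f1 a := by
    intro a ha
    exact hφ.inj (by rw [u.comm_s, uu.comm_s, ha]) (h1 a)
  have h0 : ∀ y, u.f0 y = uu.f0 y := by
    intro y
    induction hU x y with
    | refl => exact hx
    | tail _ hab ih =>
      obtain ⟨a, rfl, rfl⟩ := hab
      rw [← u.comm_t, ← uu.comm_t, key a ih]
  exact UGraph.Hom.ext (funext h0) (funext fun a => key a (h0 _))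

section Unfold

variable {p : ℕ} {X : UGraph} (e : cycleU p ⟶ X)

/-- endpoint in `X` of a path starting at the cycle node `n` (last half-arc first) -/
def endpt (n : ZMod p) : List X.half → X.nodes
  | [] => e.f0 n
  | a :: _ => X.t a

/-- the path is reduced and leaves the cycle -/
def Valid (n : ZMod p) : List X.half → Prop
  | [] => True
  | [a] => X.s a = e.f0 n ∧ a ≠ e.f1 (n, true) ∧ a ≠ e.f1 ((n - 1 : ZMod p), false)
  | a :: b :: l => X.s a = X.t b ∧ a ≠ X.inv b ∧ Valid n (b :: l)

theorem Valid.tail {n : ZMod p} {a : X.half} {l : List X.half} (h : Valid e n (a :: l)) :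
    Valid e n l := by
  cases l with
  | nil => trivial
  | cons b l => exact h.2.2

theorem Valid.src {n : ZMod p} {a : X.half} {l : List X.half} (h : Valid e n (a :: l)) :
    X.s a = endpt e n l := by
  cases l with
  | nil => exact h.1
  | cons b l => exact h.1

/-- follow the half-arc `a` -/
noncomputable def mv (n : ZMod p) : List X.half → X.half → ZMod p × List X.half
  | [], a => if a = e.f1 (n, true) then (n + 1, [])
      else if a = e.f1 ((n - 1 : ZMod p), false) then (n - 1, []) else (n, [a])
  | b :: l, a => if a = X.inv b then (n, l) else (n, a :: b :: l)

theorem mv_valid (n : ZMod p) (l : List X.half) (a : X.half) (hl : Valid e n l)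
    (ha : X.s a = endpt e n l) : Valid e (mv e n l a).1 (mv e n l a).2 := by
  cases l with
  | nil =>
    simp only [mv]
    split_ifs with h1 h2
    · trivial
    · trivial
    · exact ⟨ha, h1, h2⟩
  | cons b l =>
    simp only [mv]
    split_ifs with h1
    · exact hl.tail
    · exact ⟨ha, h1, hl⟩

theorem mv_fin (n : ZMod p) (l : List X.half) (a : X.half) (hl : Valid e n l) :
    endpt e (mv e n l a).1 (mv e n l a).2 = X.t a := by
  cases l with
  | nil =>
    simp only [mv]
    split_ifs with h1 h2
    · rw [h1, t_plus]; rfl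
    · rw [h2, t_minus]; rfl
    · rfl
  | cons b l =>
    simp only [mv]
    split_ifs with h1
    · rw [h1, t_inv]; exact hl.src.symm
    · rfl

theorem mv_plus (n : ZMod p) : mv e n [] (e.f1 (n, true)) = (n + 1, []) := by
  simp [mv]

theorem mv_minus (he : BFree e) (n : ZMod p) :
    mv e (n + 1) [] (e.f1 (n, false)) = (n, []) := by
  have := he n
  simp [mv, this.symm]

theorem mv_cons (n : ZMod p) (l : List X.half) (a : X.half) (hl : Valid e n (a :: l)) :
    mv e n l a = (n, a :: l) := by
  cases l with
  | nil => simp [mv, hl.2.1, hl.2.2]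
  | cons b l => simp [mv, hl.2.1]

theorem mv_mv (he : BFree e) (n : ZMod p) (l : List X.half) (a : X.half) (hl : Valid e n l) :
    mv e (mv e n l a).1 (mv e n l a).2 (X.inv a) = (n, l) := by
  cases l with
  | nil =>
    by_cases h1 : a = e.f1 (n, true)
    · subst h1
      rw [mv_plus, inv_plus, mv_minus e he]
    · by_cases h2 : a = e.f1 ((n - 1 : ZMod p), false)
      · have : mv e n [] a = (n - 1, []) := by simp only [mv, if_neg h1, if_pos h2]
        rw [this, h2, inv_minus]
        simp [mv_plus]
      · have : mv e n [] a = (n, [a]) := by simp only [mv, if_neg h1, if_neg h2]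
        rw [this]
        simp [mv]
  | cons b l =>
    by_cases h1 : a = X.inv b
    · have : mv e n (b :: l) a = (n, l) := by simp only [mv, if_pos h1]
      rw [this, h1, X.inv_inv]
      exact mv_cons e n l b hl
    · have : mv e n (b :: l) a = (n, a :: b :: l) := by simp only [mv, if_neg h1]
      rw [this]
      simp [mv]

/-- nodes of the unfolding -/
def UN : Type := {x : ZMod p × List X.half // Valid e x.1 x.2}

/-- half-arcs of the unfolding -/
def UH : Type := {y : UN e × X.half // X.s y.2 = endpt e y.1.1.1 y.1.1.2}

/-- target of a half-arc -/
noncomputable def ut (y : UH e) : UN e :=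
  ⟨mv e y.1.1.1.1 y.1.1.1.2 y.1.2, mv_valid e _ _ _ y.1.1.2 y.2⟩

/-- the unfolding of `X` along `e` -/
noncomputable def UG (he : BFree e) : UGraph where
  nodes := UN e
  half := UH e
  s y := y.1.1
  t y := ut e y
  inv y := ⟨(ut e y, X.inv y.1.2), by
    rw [X.s_inv]; exact (mv_fin e _ _ _ y.1.1.2).symm⟩
  inv_inv y := by
    apply Subtype.ext
    refine Prod.ext ?_ ?_
    · exact Subtype.ext (mv_mv e he _ _ _ y.1.1.2)
    · exact X.inv_inv _
  s_inv y := rfl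

/-- the covering -/
noncomputable def UV (he : BFree e) : UG e he ⟶ X where
  f0 x := endpt e x.1.1 x.1.2
  f1 y := y.1.2
  comm_s y := y.2
  comm_t y := (mv_fin e _ _ _ y.1.1.2).symm
  comm_inv _ := rfl

theorem UV_cov (he : BFree e) : IsCovering (UV e he) := by
  intro x
  constructor
  · rintro ⟨⟨⟨x1, a⟩, ha⟩, h1⟩ ⟨⟨⟨x2, b⟩, hb⟩, h2⟩ hab
    have hab' : a = b := congrArg Subtype.val hab
    subst hab'
    have h3 : x1 = x2 := h1.trans h2.symm
    subst h3
    rfl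
  · rintro ⟨a, ha⟩
    exact ⟨⟨⟨(x, a), ha⟩, rfl⟩, rfl⟩

/-- base nodes -/
def nd (n : ZMod p) : UN e := ⟨(n, []), trivial⟩

/-- base half-arcs -/
def ha : ZMod p × Bool → UH e
  | (n, true) => ⟨(nd e n, e.f1 (n, true)), s_plus e n⟩
  | (n, false) => ⟨(nd e (n + 1), e.f1 (n, false)), s_minus e n⟩

theorem ut_ha (he : BFree e) (a : ZMod p × Bool) :
    ut e (ha e a) = nd e (if a.2 then a.1 + 1 else a.1) := by
  rcases a with ⟨n, _ | _⟩
  · exact Subtype.ext (mv_minus e he n)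
  · exact Subtype.ext (mv_plus e n)

/-- the cycle in the unfolding -/
noncomputable def UC (he : BFree e) : cycleU p ⟶ UG e he where
  f0 n := nd e n
  f1 a := ha e a
  comm_s a := by
    rcases a with ⟨n, _ | _⟩ <;> rfl
  comm_t a := ut_ha e he a
  comm_inv a := by
    rcases a with ⟨n, _ | _⟩
    · exact Subtype.ext (Prod.ext (ut_ha e he _) (inv_minus e n))
    · exact Subtype.ext (Prod.ext (ut_ha e he _) (inv_plus e n))

theorem UC_UV (he : BFree e) : UC e he ≫ UV e he = e := by
  refine UGraph.Hom.ext (funext fun n => rfl) (funext fun a => ?_)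
  rcases a with ⟨n, _ | _⟩ <;> rfl

theorem adj_symm (U : UGraph) {x y : U.nodes} (h : U.adj x y) : U.adj y x := by
  obtain ⟨a, rfl, rfl⟩ := h
  exact ⟨U.inv a, U.s_inv a, t_inv U a⟩

theorem rtg_symm (U : UGraph) {x y : U.nodes} (h : Relation.ReflTransGen U.adj x y) :
    Relation.ReflTransGen U.adj y x := by
  induction h with
  | refl => exact .refl
  | tail _ h ih => exact .head (adj_symm U h) ih

theorem UG_conn (hp : 1 ≤ p) (he : BFree e) : (UG e he).Connected := by
  have : NeZero p := ⟨by omega⟩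
  have base : ∀ k : ℕ, Relation.ReflTransGen (UG e he).adj (nd e 0) (nd e (k : ZMod p)) := by
    intro k
    induction k with
    | zero => rw [Nat.cast_zero]; exact .refl
    | succ k ih =>
      refine ih.tail ⟨ha e ((k : ZMod p), true), rfl, ?_⟩
      rw [Nat.cast_succ]
      exact ut_ha e he _
  have all : ∀ (l : List X.half) (n : ZMod p) (hl : Valid e n l),
      Relation.ReflTransGen (UG e he).adj (nd e 0) (⟨(n, l), hl⟩ : UN e) := by
    intro l
    induction l with
    | nil =>
      intro n hl
      have := base n.val
      rw [ZMod.natCast_zmod_val] at this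
      exact this
    | cons a l ih =>
      intro n hl
      refine (ih n hl.tail).tail ⟨⟨(⟨(n, l), hl.tail⟩, a), hl.src⟩, rfl, ?_⟩
      exact Subtype.ext (mv_cons e n l a hl)
  intro x y
  exact (rtg_symm _ (all x.1.2 x.1.1 x.2)).trans (all y.1.2 y.1.1 y.2)

theorem arc_of_len (y : UH e) (b : X.half) (l : List X.half) (hy : y.1.1.1.2 = b :: l)
    (hlen : (ut e y).1.2.length ≤ y.1.1.1.2.length) : y.1.2 = X.inv b := by
  obtain ⟨⟨⟨⟨n, ll⟩, hl⟩, a⟩, h⟩ := y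
  dsimp only at hy
  subst hy
  by_contra hne
  simp [ut, mv, if_neg hne] at hlen

theorem arc_of_nil (y : UH e) (hy : y.1.1.1.2 = [])
    (ht : (ut e y).1.2 = []) : ∃ b, y = ha e b := by
  obtain ⟨⟨⟨⟨n, ll⟩, hl⟩, a⟩, h⟩ := y
  dsimp only at hy
  subst hy
  by_cases h1 : a = e.f1 (n, true)
  · subst h1
    exact ⟨(n, true), rfl⟩
  · by_cases h2 : a = e.f1 ((n - 1 : ZMod p), false)
    · subst h2
      refine ⟨((n - 1 : ZMod p), false), ?_⟩
      refine Subtype.ext (Prod.ext (Subtype.ext (Prod.ext ?_ rfl)) rfl)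
      exact (sub_add_cancel n 1).symm
    · simp [ut, mv, if_neg h1, if_neg h2] at ht

theorem UC_forest (hp : 1 ≤ p) (he : BFree e) : CycleForest p (UC e he) := by
  refine ⟨UG_conn e hp he, ?_, ?_, ?_⟩
  · intro n m hnm
    exact congrArg (fun x : UN e => x.1.1) hnm
  · intro a b hab
    have h1 : (ha e a).1.1.1.1 = (ha e b).1.1.1.1 := congrArg (fun y : UH e => y.1.1.1.1) hab
    have h2 : (ha e a).1.2 = (ha e b).1.2 := congrArg (fun y : UH e => y.1.2) hab
    rcases a with ⟨n, _ | _⟩ <;> rcases b with ⟨m, _ | _⟩ <;> simp only [ha, nd] at h1 h2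
    · rw [add_right_cancel h1]
    · subst h1; exact absurd h2.symm (he n)
    · subst h1; exact absurd h2 (he m)
    · rw [h1]
  · intro q hq d hd
    have : NeZero q := ⟨by omega⟩
    let L : ZMod q → ℕ := fun k => (show UN e from d.f0 k).1.2.length
    have hL : ∀ k, L k = 0 := by
      obtain ⟨k, hk⟩ := Finite.exists_max L
      have hk0 : L k = 0 := by
        by_contra hne
        obtain ⟨m, rfl⟩ : ∃ m, k = m + 1 := ⟨k - 1, (sub_add_cancel k 1).symm⟩
        obtain ⟨b, l, hbl⟩ : ∃ b l, (show UN e from d.f0 (m + 1 : ZMod q)).1.2 = b :: l :=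
          List.exists_cons_of_ne_nil (fun h0 => hne (by simp only [L, h0, List.length_nil]))
        have key : ∀ y : UH e, y.1.1 = (show UN e from d.f0 (m + 1 : ZMod q)) →
            (∃ j, ut e y = d.f0 j) → y.1.2 = X.inv b := by
          rintro y hy ⟨j, hj⟩
          apply arc_of_len e y b l (by rw [hy]; exact hbl)
          rw [hj, hy]
          exact hk j
        have e1 := key (d.f1 (m + 1, true)) (s_plus d (m + 1)) ⟨_, t_plus d (m + 1)⟩
        have e2 := key (d.f1 (m, false)) (s_minus d m) ⟨_, t_minus d m⟩
        apply hd m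
        apply Subtype.ext
        refine Prod.ext ?_ (e1.trans e2.symm)
        exact (s_plus d (m + 1)).trans (s_minus d m).symm
      intro j
      have := hk j
      omega
    have hnil : ∀ k, (show UN e from d.f0 k).1.2 = [] := fun k => List.length_eq_zero_iff.1 (hL k)
    constructor
    · intro k
      exact ⟨(show UN e from d.f0 k).1.1, Subtype.ext (Prod.ext rfl (hnil k))⟩
    · intro a
      refine arc_of_nil e (d.f1 a) ?_ ?_
      · have : (show UH e from d.f1 a).1.1 = d.f0 _ := d.comm_s a
        rw [this]; exact hnil _
      · have : ut e (d.f1 a) = d.f0 _ := d.comm_t a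
        rw [this]; exact hnil _

variable {W : UGraph} {φ : W ⟶ X} (hφ : IsCovering φ)

/-- lift of a half-arc -/
noncomputable def lft (w : W.nodes) (a : X.half) (h : X.s a = φ.f0 w) : W.half :=
  Classical.choose (hφ.surj w a h)

theorem lft_s (w : W.nodes) (a : X.half) (h : X.s a = φ.f0 w) : W.s (lft hφ w a h) = w :=
  (Classical.choose_spec (hφ.surj w a h)).1

theorem lft_f (w : W.nodes) (a : X.half) (h : X.s a = φ.f0 w) : φ.f1 (lft hφ w a h) = a :=
  (Classical.choose_spec (hφ.surj w a h)).2

theorem lft_eq (w : W.nodes) (a : X.half) (h : X.s a = φ.f0 w) (b : W.half) (hb : W.s b = w)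
    (hb' : φ.f1 b = a) : lft hφ w a h = b :=
  hφ.inj (by rw [lft_s, hb]) (by rw [lft_f, hb'])

/-- lift of a path -/
noncomputable def u0 (κ : cycleU p ⟶ W) (n : ZMod p) : List X.half → W.nodes
  | [] => κ.f0 n
  | a :: l => if h : X.s a = φ.f0 (u0 κ n l) then W.t (lft hφ _ a h) else u0 κ n l

theorem u0_cons (κ : cycleU p ⟶ W) (n : ZMod p) (a : X.half) (l : List X.half)
    (h : X.s a = φ.f0 (u0 hφ κ n l)) : u0 hφ κ n (a :: l) = W.t (lft hφ _ a h) := by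
  simp only [u0, dif_pos h]

theorem u0_fin (κ : cycleU p ⟶ W) (hκ : κ ≫ φ = e) (n : ZMod p) (l : List X.half)
    (hl : Valid e n l) : φ.f0 (u0 hφ κ n l) = endpt e n l := by
  induction l with
  | nil => subst hκ; rfl
  | cons a l ih =>
    have h : X.s a = φ.f0 (u0 hφ κ n l) := by rw [ih hl.tail]; exact hl.src
    simp only [u0, dif_pos h, endpt]
    rw [← φ.comm_t, lft_f]

theorem u0_mv (κ : cycleU p ⟶ W) (hκ : κ ≫ φ = e) (n : ZMod p) (l : List X.half)
    (hl : Valid e n l) (a : X.half) (h : X.s a = φ.f0 (u0 hφ κ n l)) :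
    W.t (lft hφ _ a h) = u0 hφ κ (mv e n l a).1 (mv e n l a).2 := by
  cases l with
  | nil =>
    by_cases h1 : a = e.f1 (n, true)
    · have : lft hφ _ a h = κ.f1 (n, true) :=
        lft_eq hφ _ _ _ _ (s_plus κ n) (by rw [h1, ← hκ]; rfl)
      rw [this, t_plus, h1, mv_plus]; rfl
    · by_cases h2 : a = e.f1 ((n - 1 : ZMod p), false)
      · have : lft hφ _ a h = κ.f1 ((n - 1 : ZMod p), false) :=
          lft_eq hφ _ _ _ _ (by rw [s_minus, sub_add_cancel]; rfl) (by rw [h2, ← hκ]; rfl)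
        rw [this, t_minus]
        simp only [mv, if_neg h1, if_pos h2]; rfl
      · simp only [mv, if_neg h1, if_neg h2]
        rw [u0, dif_pos h]
  | cons b l =>
    by_cases h1 : a = X.inv b
    · have hb : X.s b = φ.f0 (u0 hφ κ n l) := by
        rw [u0_fin e hφ κ hκ n l hl.tail]; exact hl.src
      have : lft hφ _ a h = W.inv (lft hφ _ b hb) := by
        apply lft_eq
        · rw [W.s_inv]; exact (u0_cons hφ κ n b l hb).symm
        · rw [← φ.comm_inv, lft_f, h1]
      rw [this, t_inv, lft_s]
      simp only [mv, if_pos h1]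
    · simp only [mv, if_neg h1]
      exact (u0_cons hφ κ n a (b :: l) h).symm

theorem UE_src (κ : cycleU p ⟶ W) (hκ : κ ≫ φ = e) (y : UH e) :
    X.s y.1.2 = φ.f0 (u0 hφ κ y.1.1.1.1 y.1.1.1.2) := by
  rw [u0_fin e hφ κ hκ _ _ y.1.1.2]; exact y.2

/-- extension of a lifted cycle to the unfolding -/
noncomputable def UE (he : BFree e) (κ : cycleU p ⟶ W) (hκ : κ ≫ φ = e) : UG e he ⟶ W where
  f0 x := u0 hφ κ x.1.1 x.1.2
  f1 y := lft hφ (u0 hφ κ y.1.1.1.1 y.1.1.1.2) y.1.2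
    (by rw [u0_fin e hφ κ hκ _ _ y.1.1.2]; exact y.2)
  comm_s y := lft_s _ _ _ _
  comm_t y := u0_mv e hφ κ hκ _ _ y.1.1.2 _ _
  comm_inv y := by
    symm
    apply lft_eq
    · rw [W.s_inv]
      exact u0_mv e hφ κ hκ _ _ y.1.1.2 _
        (by rw [u0_fin e hφ κ hκ _ _ y.1.1.2]; exact y.2)
    · rw [← φ.comm_inv, lft_f]; rfl

theorem UE_comp (he : BFree e) (κ : cycleU p ⟶ W) (hκ : κ ≫ φ = e) :
    UE e hφ he κ hκ ≫ φ = UV e he := by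
  refine UGraph.Hom.ext (funext fun x => ?_) (funext fun y => ?_)
  · exact u0_fin e hφ κ hκ _ _ x.2
  · exact lft_f hφ _ _ (UE_src e hφ κ hκ y)

theorem UC_UE (he : BFree e) (κ : cycleU p ⟶ W) (hκ : κ ≫ φ = e) :
    UC e he ≫ UE e hφ he κ hκ = κ := by
  refine UGraph.Hom.ext (funext fun x => rfl) (funext fun a => ?_)
  rcases a with ⟨n, _ | _⟩
  · exact lft_eq hφ _ _ (UE_src e hφ κ hκ (ha e (n, false))) _ (s_minus κ n)
      (congrFun (congrArg UGraph.Hom.f1 hκ) (n, false))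
  · exact lft_eq hφ _ _ (UE_src e hφ κ hκ (ha e (n, true))) _ (s_plus κ n)
      (congrFun (congrArg UGraph.Hom.f1 hκ) (n, true))

end Unfold

end Helpers

/-- let `f : Y ⟶ X` and `g : Z ⟶ X` be coverings with `Y`, `Z`
loop-free, and `h : Y ⟶ Z` a covering with `g ∘ h = f`.  If for every `p ≥ 1` and
every covering `v : U ⟶ X` by a `p`-cycle with an attached forest, postcomposition
with `h` is a bijection between morphisms `U ⟶ Y` over `X` and morphisms `U ⟶ Z`
over `X`, then `h` induces a bijection between backtrack-free `p`-cycles of `Y` and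
of `Z` for every `p ≥ 1`; in particular, when `Y` and `Z` are finite they have the
same Ihara zeta function (the same number of backtrack-free `p`-cycles for all `p`). -/
theorem stmt_12 {X Y Z : UGraph} (f : Y ⟶ X) (g : Z ⟶ X)
    (hf : IsCovering f) (hg : IsCovering g)
    (hYnoloop : ∀ u : Y.half, Y.s u ≠ Y.t u)
    (hZnoloop : ∀ u : Z.half, Z.s u ≠ Z.t u)
    (h : Y ⟶ Z) (hh : IsCovering h) (hcomm : h ≫ g = f)
    (hyp : ∀ (p : ℕ), 1 ≤ p → ∀ (U : UGraph) (v : U ⟶ X), IsCovering v →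
      (∃ c : cycleU p ⟶ U, CycleForest p c) →
        Function.Bijective (fun u : {u : U ⟶ Y // u ≫ f = v} =>
          (⟨u.1 ≫ h, by rw [Category.assoc, hcomm, u.2]⟩ : {w : U ⟶ Z // w ≫ g = v}))) :
    (∀ p : ℕ, 1 ≤ p →
        ∃ H : ∀ c : cycleU p ⟶ Y, BFree c → BFree (c ≫ h),
          Function.Bijective (fun c : {c : cycleU p ⟶ Y // BFree c} =>
            (⟨c.1 ≫ h, H c.1 c.2⟩ : {d : cycleU p ⟶ Z // BFree d}))) ∧
      (Finite Y.nodes → Finite Y.half → Finite Z.nodes → Finite Z.half →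
        ∀ p : ℕ, 1 ≤ p →
          Nat.card {c : cycleU p ⟶ Y // BFree c} =
            Nat.card {d : cycleU p ⟶ Z // BFree d}) := by
  have main : ∀ p : ℕ, 1 ≤ p →
        ∃ H : ∀ c : cycleU p ⟶ Y, BFree c → BFree (c ≫ h),
          Function.Bijective (fun c : {c : cycleU p ⟶ Y // BFree c} =>
            (⟨c.1 ≫ h, H c.1 c.2⟩ : {d : cycleU p ⟶ Z // BFree d})) := by
    intro p hp
    refine ⟨fun c hc => hc.comp hh, ?_, ?_⟩
    · rintro ⟨c1, hc1⟩ ⟨c2, hc2⟩ hc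
      have hc : c1 ≫ h = c2 ≫ h := congrArg Subtype.val hc
      apply Subtype.ext
      change c1 = c2
      have he : BFree (c1 ≫ f) := hc1.comp hf
      have h2 : c2 ≫ f = c1 ≫ f := by
        rw [← hcomm, ← Category.assoc, ← hc, Category.assoc]
      have hb := hyp p hp (UG _ he) (UV _ he) (UV_cov _ he) ⟨UC _ he, UC_forest _ hp he⟩
      have e1 := UE_comp (c1 ≫ f) hf he c1 rfl
      have e2 := UE_comp (c1 ≫ f) hf he c2 h2
      have r1 := UC_UE (c1 ≫ f) hf he c1 rfl
      have r2 := UC_UE (c1 ≫ f) hf he c2 h2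
      have huu : UE (c1 ≫ f) hf he c1 rfl ≫ h = UE (c1 ≫ f) hf he c2 h2 ≫ h := by
        refine lift_unique hg (UG_conn _ hp he) _ _ ?_ ((UC _ he).f0 (0 : ZMod p)) ?_
        · rw [Category.assoc, Category.assoc, hcomm, e1, e2]
        · exact congrFun (congrArg UGraph.Hom.f0 hc) (0 : ZMod p)
      have := hb.1 (a₁ := ⟨_, e1⟩) (a₂ := ⟨_, e2⟩) (Subtype.ext huu)
      have := congrArg Subtype.val this
      dsimp only at this
      rw [← r1, this, r2]
    · rintro ⟨d, hd⟩
      have he : BFree (d ≫ g) := hd.comp hg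
      have hb := hyp p hp (UG _ he) (UV _ he) (UV_cov _ he) ⟨UC _ he, UC_forest _ hp he⟩
      obtain ⟨⟨u, hu⟩, huw⟩ := hb.2 ⟨_, UE_comp (d ≫ g) hg he d rfl⟩
      have huw : u ≫ h = _ := congrArg Subtype.val huw
      have hd' : (UC _ he ≫ u) ≫ h = d := by
        rw [Category.assoc, huw]; exact UC_UE (d ≫ g) hg he d rfl
      refine ⟨⟨UC _ he ≫ u, BFree.of_comp (f := h) ?_⟩, Subtype.ext hd'⟩
      rw [hd']; exact hd
  refine ⟨main, fun _ _ _ _ p hp => ?_⟩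
  obtain ⟨H, hH⟩ := main p hp
  exact Nat.card_congr (Equiv.ofBijective _ hH)

end Paper
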